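/- arXiv:2502.06169 — 2 statements merged into one kernel-verified Lean document; each statement's English description precedes it below -/
import Mathlib

section
/- Let A be the 3×3 generalized Cartan matrix with rows (2, −1, −3), (−3, 2, −1), (−2, −4, 2), whose principal submatrix A₁₂ is the Cartan matrix of type G₂. Over ℚ, for every n ≥ 0 the homogeneous component of (polynomial) degree n of the subalgebra of ℚ[ω₁,ω₂,ω₃] fixed by both σ₁ and σ₂ has ℚ-dimension equal to the number of triples (a,b,c) of nonnegative integers with a + 2b + 6c = n; i.e. its Hilbert series in polynomial degree is 1/((1−t)(1−t²)(1−t⁶)). -/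
open MvPolynomial

/-- The Cartan matrix with rows `(2,−1,−3)`, `(−3,2,−1)`, `(−2,−4,2)`; its
principal submatrix `A₁₂` is the Cartan matrix of type `G₂`. -/
def Amat : Matrix (Fin 3) (Fin 3) ℤ := !![2, -1, -3; -3, 2, -1; -2, -4, 2]

/-- The simple root `α_j = a₁ⱼω₁ + a₂ⱼω₂ + a₃ⱼω₃` viewed in `F[ω₁,ω₂,ω₃]`. -/
noncomputable def cartanAlpha (A : Matrix (Fin 3) (Fin 3) ℤ) (F : Type*) [Field F]
    (j : Fin 3) : MvPolynomial (Fin 3) F :=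
  ∑ i : Fin 3, (C ((A i j : ℤ) : F)) * X i

/-- The simple reflection `σ_j`. -/
noncomputable def cartanSigma (A : Matrix (Fin 3) (Fin 3) ℤ) (F : Type*) [Field F]
    (j : Fin 3) : MvPolynomial (Fin 3) F →ₐ[F] MvPolynomial (Fin 3) F :=
  aeval (fun i => if i = j then X j - cartanAlpha A F j else X i)

/-- The subspace of `σ_j`-invariant polynomials. -/
noncomputable def fixedSubmodule (A : Matrix (Fin 3) (Fin 3) ℤ) (F : Type*) [Field F]
    (j : Fin 3) : Submodule F (MvPolynomial (Fin 3) F) :=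
  LinearMap.ker ((cartanSigma A F j).toLinearMap - LinearMap.id)

/-!
The reflections `σ₁`, `σ₂` act on the span of `α₁`, `α₂` as the simple reflections of `G₂` and fix
`ω₃`. Let `Iₙ` be the space of invariants of degree `n` and restrict polynomials to the wall
`α₁ = 0`, with coordinates `α₂`, `ω₃`. The reflection in the short root orthogonal to `α₁` acts on
the wall by `α₂ ↦ -α₂`, so restrictions of invariants are even in `α₂`; all even polynomials occur,
because the invariant quadratic form `α₁² + 3α₁α₂ + 3α₂²` restricts to `3α₂²`. An invariant
vanishing on this wall vanishes to second order there, hence on the walls of all three positive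
long roots, so it is a multiple of the square `P` of their product. Rank-nullity
`dim Iₙ = #{(a, b) | a + 2b = n} + dim Iₙ₋₆` is the recursion satisfied by the number of triples.
-/

namespace G2Invariants

section MvPolynomial

variable {ι R : Type*} [CommRing R]

theorem coeff_aeval_update_neg_X [DecidableEq ι] (i : ι) (f : MvPolynomial ι R) (d : ι →₀ ℕ) :
    coeff d (aeval (Function.update X i (-X i)) f) = (-1) ^ d i * coeff d f := by
  induction f using MvPolynomial.induction_on' with
  | monomial e a =>
    have h_factor (j : ι) (k : ℕ) : Function.update X i (-X i) j ^ k =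
        (if i = j then (-1) ^ k else 1) * (X j : MvPolynomial ι R) ^ k := by
      rcases eq_or_ne i j with rfl | hij
      · rw [Function.update_self, if_pos rfl, neg_pow]
      · simp [hij, hij.symm]
    have h_monomial : aeval (Function.update X i (-X i)) (monomial e a) =
        monomial e ((-1) ^ e i * a) := by
      rw [aeval_monomial, algebraMap_eq, monomial_eq (s := e), C_mul]
      simp only [h_factor, Finsupp.prod_mul, Finsupp.prod_ite_eq]
      split_ifs with he
      · simp [mul_left_comm, mul_assoc]
      · simp [Finsupp.notMem_support_iff.mp he]
    rw [h_monomial, coeff_monomial, coeff_monomial]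
    split_ifs with h
    · rw [h]
    · rw [mul_zero]
  | add p q hp hq => rw [map_add, coeff_add, coeff_add, hp, hq, mul_add]

theorem even_of_aeval_update_neg_X_eq_self [NoZeroDivisors R] (h2 : (2 : R) ≠ 0)
    [DecidableEq ι] {i : ι} {f : MvPolynomial ι R}
    (hf : aeval (Function.update X i (-X i)) f = f) {d : ι →₀ ℕ} (hd : coeff d f ≠ 0) :
    Even (d i) := by
  by_contra h_odd
  have h_neg : coeff d f = -coeff d f := by
    have h_coeff := coeff_aeval_update_neg_X i f d
    rwa [hf, (Nat.not_even_iff_odd.mp h_odd).neg_one_pow, neg_one_mul] at h_coeff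
  have h_two : 2 * coeff d f = 0 := by linear_combination h_neg
  exact hd ((mul_eq_zero.mp h_two).resolve_left h2)

theorem isHomogeneous_of_mul_left [NoZeroDivisors R] {p q : MvPolynomial ι R} {m n : ℕ}
    (hp : p.IsHomogeneous m) (hp0 : p ≠ 0) (hpq : (p * q).IsHomogeneous (m + n)) :
    q.IsHomogeneous n := by
  let _ : GradedAlgebra (homogeneousSubmodule ι R) := MvPolynomial.gradedAlgebra
  have h_component := DirectSum.coe_decompose_mul_add_of_left_mem (homogeneousSubmodule ι R)
    (j := n) (b := q) hp
  rw [DirectSum.decompose_of_mem_same (homogeneousSubmodule ι R) hpq] at h_component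
  rw [mul_left_cancel₀ hp0 h_component]
  exact (DirectSum.decompose (homogeneousSubmodule ι R) q n).2

theorem eq_zero_of_isHomogeneous_of_dvd [NoZeroDivisors R] {p f : MvPolynomial ι R} {m n : ℕ}
    (hp : p.IsHomogeneous m) (hf : f.IsHomogeneous n) (hpf : p ∣ f) (hnm : n < m) : f = 0 := by
  by_contra hf0
  have h_le := totalDegree_le_of_dvd_of_isDomain hpf hf0
  rw [hp.totalDegree (ne_zero_of_dvd_ne_zero hf0 hpf), hf.totalDegree hf0] at h_le
  omega

theorem finrank_restrictSupport [Nontrivial R] (s : Set (ι →₀ ℕ)) :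
    Module.finrank R (restrictSupport R s) = s.ncard :=
  Module.finrank_eq_nat_card_basis (basisRestrictSupport R s)

end MvPolynomial

theorem finrank_map_add_finrank_inf_ker {K V W : Type*} [DivisionRing K] [AddCommGroup V]
    [Module K V] [AddCommGroup W] [Module K W] (φ : V →ₗ[K] W) (U : Submodule K V)
    [FiniteDimensional K U] :
    Module.finrank K (U.map φ) + Module.finrank K ↥(U ⊓ LinearMap.ker φ) =
      Module.finrank K U := by
  have h_ker : Module.finrank K (LinearMap.ker (φ.domRestrict U)) =
      Module.finrank K ↥(U ⊓ LinearMap.ker φ) := by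
    rw [LinearMap.ker_domRestrict, ← Submodule.finrank_map_subtype_eq]
    exact congrArg (fun p : Submodule K V => Module.finrank K p)
      (Submodule.map_comap_subtype U (LinearMap.ker φ))
  rw [← LinearMap.range_domRestrict, ← h_ker, LinearMap.finrank_range_add_finrank_ker]

section Invariants

variable {A : Matrix (Fin 3) (Fin 3) ℤ} {F : Type*} [Field F]

theorem isHomogeneous_cartanAlpha (j : Fin 3) : (cartanAlpha A F j).IsHomogeneous 1 :=
  IsHomogeneous.sum _ _ _ fun _ _ => isHomogeneous_C_mul_X _ _

theorem cartanSigma_X_of_ne {i j : Fin 3} (hij : i ≠ j) : cartanSigma A F j (X i) = X i := by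
  simp [cartanSigma, hij]

theorem cartanSigma_cartanAlpha (j k : Fin 3) :
    cartanSigma A F j (cartanAlpha A F k) =
      cartanAlpha A F k - C (A j k : F) * cartanAlpha A F j := by
  have h_term (i : Fin 3) : cartanSigma A F j (C (A i k : F) * X i) =
      C (A i k : F) * X i - if i = j then C (A j k : F) * cartanAlpha A F j else 0 := by
    rw [map_mul, ← algebraMap_eq, AlgHom.commutes]
    rcases eq_or_ne i j with rfl | hij
    · simp [cartanSigma, mul_sub]
    · simp [cartanSigma_X_of_ne hij, hij]
  rw [cartanAlpha, map_sum, Finset.sum_congr rfl fun i _ => h_term i, Finset.sum_sub_distrib,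
    Finset.sum_ite_eq' Finset.univ j, if_pos (Finset.mem_univ j)]

theorem mem_fixedSubmodule_iff {j : Fin 3} {f : MvPolynomial (Fin 3) F} :
    f ∈ fixedSubmodule A F j ↔ cartanSigma A F j f = f := by
  simp [fixedSubmodule, sub_eq_zero]

/-- The space of homogeneous polynomials of degree `n` fixed by the first two reflections `σ₁` and
`σ₂` (indexed here by `0` and `1`). -/
noncomputable def invariants (A : Matrix (Fin 3) (Fin 3) ℤ) (F : Type*) [Field F] (n : ℕ) :
    Submodule F (MvPolynomial (Fin 3) F) :=
  homogeneousSubmodule (Fin 3) F n ⊓ fixedSubmodule A F 0 ⊓ fixedSubmodule A F 1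

theorem mem_invariants_iff {n : ℕ} {f : MvPolynomial (Fin 3) F} :
    f ∈ invariants A F n ↔
      f.IsHomogeneous n ∧ cartanSigma A F 0 f = f ∧ cartanSigma A F 1 f = f := by
  simp only [invariants, Submodule.mem_inf, mem_homogeneousSubmodule, mem_fixedSubmodule_iff,
    and_assoc]

instance finiteDimensional_invariants (n : ℕ) : FiniteDimensional F (invariants A F n) :=
  have : FiniteDimensional F (homogeneousSubmodule (Fin 3) F n) :=
    Module.Finite.of_fg (homogeneousSubmodule_fg (Fin 3) F n)
  Submodule.finiteDimensional_of_le (inf_le_left.trans inf_le_left)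

/-- The restriction of polynomials to the wall `α₁ = 0`, in the coordinates `X 0 = α₂` and
`X 1 = ω₃` on the wall. The images of `ω₁` and `ω₂` come from
`ω₁ = 2α₁ + 3α₂ - (2a₃₁ + 3a₃₂)ω₃` and `ω₂ = α₁ + 2α₂ - (a₃₁ + 2a₃₂)ω₃`. -/
noncomputable def wallRestriction (A : Matrix (Fin 3) (Fin 3) ℤ) (F : Type*) [Field F] :
    MvPolynomial (Fin 3) F →ₐ[F] MvPolynomial (Fin 2) F :=
  aeval ![C 3 * X 0 - C (2 * A 2 0 + 3 * A 2 1 : F) * X 1,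
    C 2 * X 0 - C (A 2 0 + 2 * A 2 1 : F) * X 1, X 1]

/-- The exponents of the monomials of degree `n` on the wall that are even in `α₂`. -/
def evenExponents (n : ℕ) : Set (Fin 2 →₀ ℕ) := {d | d.degree = n ∧ Even (d 0)}

/-- The quadratic form invariant under the Weyl group of type `G₂`, in the simple roots. -/
noncomputable def quadraticInvariant (A : Matrix (Fin 3) (Fin 3) ℤ) (F : Type*) [Field F] :
    MvPolynomial (Fin 3) F :=
  cartanAlpha A F 0 ^ 2 + 3 * cartanAlpha A F 0 * cartanAlpha A F 1 + 3 * cartanAlpha A F 1 ^ 2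

/-- The square of the product of the three positive long roots of `G₂`; the product itself is only
invariant up to sign. -/
noncomputable def sexticInvariant (A : Matrix (Fin 3) (Fin 3) ℤ) (F : Type*) [Field F] :
    MvPolynomial (Fin 3) F :=
  cartanAlpha A F 0 ^ 2 * (cartanAlpha A F 0 + 3 * cartanAlpha A F 1) ^ 2 *
    (2 * cartanAlpha A F 0 + 3 * cartanAlpha A F 1) ^ 2

local notation "α" => cartanAlpha A F
local notation "σ" => cartanSigma A F
local notation "ω₃" => (X 2 : MvPolynomial (Fin 3) F)
local notation "ρ" => wallRestriction A F
local notation "Q" => quadraticInvariant A F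
local notation "P" => sexticInvariant A F

theorem wallRestriction_omega_three : ρ ω₃ = X 1 := by
  simp [wallRestriction]

theorem isHomogeneous_wallRestriction {n : ℕ} {f : MvPolynomial (Fin 3) F}
    (hf : f.IsHomogeneous n) : (ρ f).IsHomogeneous n := by
  rw [← one_mul n]
  refine hf.aeval _ fun i => ?_
  fin_cases i
  · exact (isHomogeneous_C_mul_X _ _).sub (isHomogeneous_C_mul_X _ _)
  · exact (isHomogeneous_C_mul_X _ _).sub (isHomogeneous_C_mul_X _ _)
  · exact isHomogeneous_X _ _

theorem isHomogeneous_quadraticInvariant : (Q).IsHomogeneous 2 := by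
  have h₀ := isHomogeneous_cartanAlpha (A := A) (F := F) 0
  have h₁ := isHomogeneous_cartanAlpha (A := A) (F := F) 1
  rw [quadraticInvariant, mul_assoc, ← map_ofNat C 3]
  exact ((h₀.pow 2).add ((h₀.mul h₁).C_mul 3)).add ((h₁.pow 2).C_mul 3)

theorem isHomogeneous_sexticInvariant : (P).IsHomogeneous 6 := by
  have h₀ := isHomogeneous_cartanAlpha (A := A) (F := F) 0
  have h₁ := isHomogeneous_cartanAlpha (A := A) (F := F) 1
  rw [sexticInvariant, ← map_ofNat C 2, ← map_ofNat C 3]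
  exact ((h₀.pow 2).mul ((h₀.add (h₁.C_mul 3)).pow 2)).mul
    (((h₀.C_mul 2).add (h₁.C_mul 3)).pow 2)

variable (hA : A.submatrix Fin.castSucc Fin.castSucc = CartanMatrix.G₂.transpose)
include hA

theorem cartanSigma_zero_alpha_zero : σ 0 (α 0) = -α 0 := by
  have h_entry : A 0 0 = 2 := congrFun₂ hA 0 0
  rw [cartanSigma_cartanAlpha, h_entry]
  push_cast [map_ofNat]
  ring

theorem cartanSigma_zero_alpha_one : σ 0 (α 1) = α 0 + α 1 := by
  have h_entry : A 0 1 = -1 := congrFun₂ hA 0 1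
  rw [cartanSigma_cartanAlpha, h_entry]
  push_cast [map_neg, map_one]
  ring

theorem cartanSigma_one_alpha_zero : σ 1 (α 0) = α 0 + 3 * α 1 := by
  have h_entry : A 1 0 = -3 := congrFun₂ hA 1 0
  rw [cartanSigma_cartanAlpha, h_entry]
  push_cast [map_neg, map_ofNat]
  ring

theorem cartanSigma_one_alpha_one : σ 1 (α 1) = -α 1 := by
  have h_entry : A 1 1 = 2 := congrFun₂ hA 1 1
  rw [cartanSigma_cartanAlpha, h_entry]
  push_cast [map_ofNat]
  ring

theorem cartanAlpha_zero_eq : α 0 = 2 * X 0 - 3 * X 1 + C (A 2 0 : F) * ω₃ := by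
  have h₀ : A 0 0 = 2 := congrFun₂ hA 0 0
  have h₁ : A 1 0 = -3 := congrFun₂ hA 1 0
  rw [cartanAlpha, Fin.sum_univ_three, h₀, h₁]
  push_cast [map_neg, map_ofNat]
  ring

theorem cartanAlpha_one_eq : α 1 = -X 0 + 2 * X 1 + C (A 2 1 : F) * ω₃ := by
  have h₀ : A 0 1 = -1 := congrFun₂ hA 0 1
  have h₁ : A 1 1 = 2 := congrFun₂ hA 1 1
  rw [cartanAlpha, Fin.sum_univ_three, h₀, h₁]
  push_cast [map_neg, map_one, map_ofNat]
  ring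

theorem algHom_ext_simpleRoots {B : Type*} [CommRing B] [Algebra F B]
    {φ ψ : MvPolynomial (Fin 3) F →ₐ[F] B} (h₀ : φ (α 0) = ψ (α 0)) (h₁ : φ (α 1) = ψ (α 1))
    (h₂ : φ ω₃ = ψ ω₃) : φ = ψ := by
  have h_omega₁ : (X 0 : MvPolynomial (Fin 3) F) =
      2 * α 0 + 3 * α 1 - C (2 * A 2 0 + 3 * A 2 1 : F) * ω₃ := by
    rw [cartanAlpha_zero_eq hA, cartanAlpha_one_eq hA]
    simp only [map_add, map_mul, map_ofNat]
    ring
  have h_omega₂ : (X 1 : MvPolynomial (Fin 3) F) =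
      α 0 + 2 * α 1 - C (A 2 0 + 2 * A 2 1 : F) * ω₃ := by
    rw [cartanAlpha_zero_eq hA, cartanAlpha_one_eq hA]
    simp only [map_add, map_mul, map_ofNat]
    ring
  ext i
  fin_cases i
  · simp only [Fin.zero_eta, h_omega₁, map_sub, map_add, map_mul, map_ofNat, algHom_C, h₀, h₁, h₂]
  · simp only [Fin.mk_one, h_omega₂, map_sub, map_add, map_mul, map_ofNat, algHom_C, h₀, h₁, h₂]
  · exact h₂

theorem wallRestriction_alpha_zero : ρ (α 0) = 0 := by
  simp only [cartanAlpha_zero_eq hA, wallRestriction, map_add, map_sub, map_mul, map_ofNat,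
    map_intCast, aeval_X, Matrix.cons_val]
  ring

theorem wallRestriction_alpha_one : ρ (α 1) = X 0 := by
  simp only [cartanAlpha_one_eq hA, wallRestriction, map_add, map_neg, map_mul, map_ofNat,
    map_intCast, aeval_X, Matrix.cons_val]
  ring

theorem wallRestriction_eq_zero_iff {f : MvPolynomial (Fin 3) F} : ρ f = 0 ↔ α 0 ∣ f := by
  constructor
  · intro hf
    let lift : MvPolynomial (Fin 2) F →ₐ[F] MvPolynomial (Fin 3) F := aeval ![α 1, ω₃]
    let mod := Ideal.Quotient.mkₐ F (Ideal.span {α 0})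
    have h_mod : mod (α 0) = 0 := by simp [mod]
    have h_lift : (mod.comp lift).comp ρ = mod := by
      apply algHom_ext_simpleRoots hA
      · simp [wallRestriction_alpha_zero hA, h_mod]
      · simp [wallRestriction_alpha_one hA, lift]
      · simp [wallRestriction_omega_three, lift]
    rw [← Ideal.mem_span_singleton, ← Ideal.Quotient.eq_zero_iff_mem]
    simpa [hf, mod] using (DFunLike.congr_fun h_lift f).symm
  · rintro ⟨g, rfl⟩
    rw [map_mul, wallRestriction_alpha_zero hA, zero_mul]

theorem wallRestriction_comp_cartanSigma_zero : (ρ).comp (σ 0) = ρ := by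
  apply algHom_ext_simpleRoots hA
  · simp [cartanSigma_zero_alpha_zero hA, wallRestriction_alpha_zero hA]
  · simp [cartanSigma_zero_alpha_one hA, wallRestriction_alpha_zero hA]
  · simp [cartanSigma_X_of_ne]

-- `σ₂σ₁σ₂σ₁σ₂` is the reflection in `α₁ + 2α₂`, the short root orthogonal to `α₁`.
theorem aeval_update_neg_X_comp_wallRestriction :
    (aeval (Function.update X 0 (-X 0))).comp ρ =
      (ρ).comp ((σ 1).comp ((σ 0).comp ((σ 1).comp ((σ 0).comp (σ 1))))) := by
  apply algHom_ext_simpleRoots hA <;>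
    simp only [AlgHom.comp_apply, map_add, map_neg, map_mul, map_ofNat, map_zero, aeval_X,
      Function.update_self, cartanSigma_zero_alpha_zero hA, cartanSigma_zero_alpha_one hA,
      cartanSigma_one_alpha_zero hA, cartanSigma_one_alpha_one hA, wallRestriction_alpha_zero hA,
      wallRestriction_alpha_one hA, wallRestriction_omega_three, cartanSigma_X_of_ne, ne_eq,
      Fin.reduceEq, not_false_eq_true, Function.update_of_ne]
  all_goals ring

theorem even_of_coeff_wallRestriction_ne_zero (h2 : (2 : F) ≠ 0) {f : MvPolynomial (Fin 3) F}
    (h₀ : σ 0 f = f) (h₁ : σ 1 f = f) {d : Fin 2 →₀ ℕ} (hd : coeff d (ρ f) ≠ 0) :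
    Even (d 0) := by
  refine even_of_aeval_update_neg_X_eq_self h2 ?_ hd
  simpa only [AlgHom.comp_apply, h₀, h₁] using
    DFunLike.congr_fun (aeval_update_neg_X_comp_wallRestriction (F := F) hA) f

theorem cartanAlpha_zero_ne_zero : α 0 ≠ 0 := by
  intro h_zero
  have h_eval : eval ![2, 1, 0] (α 0) = 1 := by
    simp only [cartanAlpha_zero_eq hA, map_add, map_sub, map_mul, map_ofNat, eval_X, eval_C,
      Matrix.cons_val]
    ring
  simp [h_zero] at h_eval

theorem prime_cartanAlpha_zero : Prime (α 0) := by
  refine ⟨cartanAlpha_zero_ne_zero hA, fun h_unit => ?_, fun f g hfg => ?_⟩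
  · simpa [wallRestriction_alpha_zero hA] using h_unit.map ρ
  · simpa only [← wallRestriction_eq_zero_iff hA, map_mul, mul_eq_zero] using hfg

theorem cartanSigma_zero_quadraticInvariant : σ 0 Q = Q := by
  simp only [quadraticInvariant, map_add, map_mul, map_pow, map_ofNat,
    cartanSigma_zero_alpha_zero hA, cartanSigma_zero_alpha_one hA]
  ring

theorem cartanSigma_one_quadraticInvariant : σ 1 Q = Q := by
  simp only [quadraticInvariant, map_add, map_mul, map_pow, map_ofNat,
    cartanSigma_one_alpha_zero hA, cartanSigma_one_alpha_one hA]
  ring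

theorem cartanSigma_zero_sexticInvariant : σ 0 P = P := by
  simp only [sexticInvariant, map_add, map_mul, map_pow, map_ofNat,
    cartanSigma_zero_alpha_zero hA, cartanSigma_zero_alpha_one hA]
  ring

theorem cartanSigma_one_sexticInvariant : σ 1 P = P := by
  simp only [sexticInvariant, map_add, map_mul, map_pow, map_ofNat,
    cartanSigma_one_alpha_zero hA, cartanSigma_one_alpha_one hA]
  ring

theorem wallRestriction_quadraticInvariant : ρ Q = C 3 * X 0 ^ 2 := by
  simp [quadraticInvariant, wallRestriction_alpha_zero hA, wallRestriction_alpha_one hA, map_ofNat]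

theorem isRelPrime_cartanAlpha_zero (h3 : (3 : F) ≠ 0) (c : MvPolynomial (Fin 3) F) :
    IsRelPrime (α 0) (c * α 0 + 3 * α 1) := by
  rw [(prime_cartanAlpha_zero hA).irreducible.isRelPrime_iff_not_dvd,
    ← wallRestriction_eq_zero_iff hA, map_add, map_mul, map_mul, wallRestriction_alpha_zero hA,
    wallRestriction_alpha_one hA, map_ofNat, ← map_ofNat C 3]
  simpa using h3

theorem sexticInvariant_ne_zero (h3 : (3 : F) ≠ 0) : P ≠ 0 := by
  have h_root (c : MvPolynomial (Fin 3) F) : c * α 0 + 3 * α 1 ≠ 0 := fun h_zero =>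
    (prime_cartanAlpha_zero hA).not_isUnit <|
      isRelPrime_zero_right.mp (h_zero ▸ isRelPrime_cartanAlpha_zero hA h3 c)
  have h_middle : α 0 + 3 * α 1 ≠ 0 := by simpa using h_root 1
  exact mul_ne_zero (mul_ne_zero (pow_ne_zero 2 (cartanAlpha_zero_ne_zero hA))
    (pow_ne_zero 2 h_middle)) (pow_ne_zero 2 (h_root 2))

theorem sq_cartanAlpha_zero_dvd (h2 : (2 : F) ≠ 0) {f : MvPolynomial (Fin 3) F}
    (h₀ : σ 0 f = f) (hf : ρ f = 0) : α 0 ^ 2 ∣ f := by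
  obtain ⟨g, rfl⟩ := (wallRestriction_eq_zero_iff hA).mp hf
  have h_odd : σ 0 g = -g := by
    rw [map_mul, cartanSigma_zero_alpha_zero hA] at h₀
    exact mul_left_cancel₀ (cartanAlpha_zero_ne_zero hA) (by linear_combination -h₀)
  have h_neg : ρ g = -ρ g := by
    rw [← map_neg, ← h_odd, ← AlgHom.comp_apply, wallRestriction_comp_cartanSigma_zero hA]
  have h_two : C 2 * ρ g = 0 := by
    rw [map_ofNat]
    linear_combination h_neg
  have h_vanish : ρ g = 0 := (mul_eq_zero.mp h_two).resolve_left (by simpa using h2)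
  rw [sq]
  exact mul_dvd_mul_left _ ((wallRestriction_eq_zero_iff hA).mp h_vanish)

theorem sexticInvariant_dvd (h2 : (2 : F) ≠ 0) (h3 : (3 : F) ≠ 0) {f : MvPolynomial (Fin 3) F}
    (h₀ : σ 0 f = f) (h₁ : σ 1 f = f) (hf : ρ f = 0) : P ∣ f := by
  have h_dvd : α 0 ^ 2 ∣ f := sq_cartanAlpha_zero_dvd hA h2 h₀ hf
  have h_dvd' : (α 0 + 3 * α 1) ^ 2 ∣ f := by
    simpa only [map_pow, cartanSigma_one_alpha_zero hA, h₁] using map_dvd (σ 1) h_dvd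
  have h_dvd'' : (2 * α 0 + 3 * α 1) ^ 2 ∣ f := by
    have h_reflect : σ 0 (α 0 + 3 * α 1) = 2 * α 0 + 3 * α 1 := by
      simp only [map_add, map_mul, map_ofNat, cartanSigma_zero_alpha_zero hA,
        cartanSigma_zero_alpha_one hA]
      ring
    simpa only [map_pow, h_reflect, h₀] using map_dvd (σ 0) h_dvd'
  have h_coprime : IsRelPrime (α 0) (α 0 + 3 * α 1) := by
    simpa using isRelPrime_cartanAlpha_zero hA h3 1
  have h_coprime' : IsRelPrime (α 0) (2 * α 0 + 3 * α 1) := isRelPrime_cartanAlpha_zero hA h3 2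
  have h_coprime'' : IsRelPrime (α 0 + 3 * α 1) (2 * α 0 + 3 * α 1) := by
    convert h_coprime.symm.add_mul_left_right 1 using 1
    ring
  exact (h_coprime'.pow.mul_left h_coprime''.pow).mul_dvd (h_coprime.pow.mul_dvd h_dvd h_dvd')
    h_dvd''

theorem map_wallRestriction_invariants (h2 : (2 : F) ≠ 0) (h3 : (3 : F) ≠ 0) (n : ℕ) :
    (invariants A F n).map (ρ).toLinearMap = restrictSupport F (evenExponents n) := by
  apply le_antisymm
  · rintro _ ⟨f, hf, rfl⟩
    obtain ⟨h_hom, h₀, h₁⟩ := mem_invariants_iff.mp hf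
    rw [mem_restrictSupport_iff]
    intro d hd
    have h_coeff := mem_support_iff.mp hd
    refine ⟨?_, even_of_coeff_wallRestriction_ne_zero hA h2 h₀ h₁ h_coeff⟩
    by_contra h_degree
    exact h_coeff ((isHomogeneous_wallRestriction h_hom).coeff_eq_zero h_degree)
  · rw [restrictSupport_eq_span, Submodule.span_le]
    rintro _ ⟨d, ⟨h_degree, m, hm⟩, rfl⟩
    refine ⟨C (3⁻¹ ^ m) * (Q ^ m * ω₃ ^ d 1), mem_invariants_iff.mpr ⟨?_, ?_, ?_⟩, ?_⟩
    · have h_hom := ((isHomogeneous_quadraticInvariant (A := A) (F := F)).pow m).mul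
        (isHomogeneous_X_pow (R := F) (2 : Fin 3) (d 1))
      convert h_hom.C_mul _ using 1
      rw [← h_degree, Finsupp.degree_eq_sum, Fin.sum_univ_two]
      omega
    · simp [algHom_C, cartanSigma_zero_quadraticInvariant hA, cartanSigma_X_of_ne]
    · simp [algHom_C, cartanSigma_one_quadraticInvariant hA, cartanSigma_X_of_ne]
    · have h_scalar : (C (3⁻¹ ^ m) * C 3 ^ m : MvPolynomial (Fin 2) F) = 1 := by
        rw [← C_pow, ← C_mul, ← mul_pow, inv_mul_cancel₀ h3, one_pow, C_1]
      have h_monomial : (monomial d (1 : F)) = X 0 ^ (2 * m) * X 1 ^ d 1 := by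
        rw [monomial_eq, C_1, one_mul, Finsupp.prod_fintype _ _ fun _ => pow_zero _,
          Fin.prod_univ_two, hm, two_mul]
      simp only [AlgHom.toLinearMap_apply, map_mul, map_pow, algHom_C, algebraMap_eq,
        wallRestriction_quadraticInvariant hA, wallRestriction_omega_three] at h_scalar ⊢
      rw [h_monomial]
      linear_combination (X 0 ^ (2 * m) * X 1 ^ d 1) * h_scalar

theorem invariants_inf_ker_of_lt (h2 : (2 : F) ≠ 0) (h3 : (3 : F) ≠ 0) {n : ℕ} (hn : n < 6) :
    invariants A F n ⊓ LinearMap.ker (ρ).toLinearMap = ⊥ := by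
  rw [eq_bot_iff]
  rintro f ⟨hf, hρ⟩
  obtain ⟨h_hom, h₀, h₁⟩ := mem_invariants_iff.mp hf
  exact eq_zero_of_isHomogeneous_of_dvd isHomogeneous_sexticInvariant h_hom
    (sexticInvariant_dvd hA h2 h3 h₀ h₁ hρ) hn

theorem invariants_inf_ker_add_six (h2 : (2 : F) ≠ 0) (h3 : (3 : F) ≠ 0) (n : ℕ) :
    invariants A F (n + 6) ⊓ LinearMap.ker (ρ).toLinearMap =
      (invariants A F n).map (LinearMap.mulLeft F P) := by
  have hP : P ≠ 0 := sexticInvariant_ne_zero hA h3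
  have hP_hom := isHomogeneous_sexticInvariant (A := A) (F := F)
  have hP₀ := cartanSigma_zero_sexticInvariant (F := F) hA
  have hP₁ := cartanSigma_one_sexticInvariant (F := F) hA
  apply le_antisymm
  · rintro f ⟨hf, hρ⟩
    obtain ⟨h_hom, h₀, h₁⟩ := mem_invariants_iff.mp hf
    obtain ⟨g, rfl⟩ := sexticInvariant_dvd hA h2 h3 h₀ h₁ hρ
    rw [map_mul, hP₀] at h₀
    rw [map_mul, hP₁] at h₁
    rw [add_comm n 6] at h_hom
    exact ⟨g, mem_invariants_iff.mpr ⟨isHomogeneous_of_mul_left hP_hom hP h_hom,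
      mul_left_cancel₀ hP h₀, mul_left_cancel₀ hP h₁⟩, rfl⟩
  · rintro _ ⟨g, hg, rfl⟩
    obtain ⟨h_hom, h₀, h₁⟩ := mem_invariants_iff.mp hg
    refine ⟨mem_invariants_iff.mpr ⟨?_, ?_, ?_⟩, ?_⟩
    · rw [LinearMap.mulLeft_apply, add_comm n 6]
      exact hP_hom.mul h_hom
    · rw [LinearMap.mulLeft_apply, map_mul, hP₀, h₀]
    · rw [LinearMap.mulLeft_apply, map_mul, hP₁, h₁]
    · simp [sexticInvariant, wallRestriction_alpha_zero hA]

theorem finrank_invariants_eq_add (h2 : (2 : F) ≠ 0) (h3 : (3 : F) ≠ 0) (n : ℕ) :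
    Module.finrank F (invariants A F n) = (evenExponents n).ncard +
      Module.finrank F ↥(invariants A F n ⊓ LinearMap.ker (ρ).toLinearMap) := by
  rw [← finrank_map_add_finrank_inf_ker (ρ).toLinearMap,
    map_wallRestriction_invariants hA h2 h3, finrank_restrictSupport]

theorem finrank_invariants_of_lt (h2 : (2 : F) ≠ 0) (h3 : (3 : F) ≠ 0) {n : ℕ} (hn : n < 6) :
    Module.finrank F (invariants A F n) = (evenExponents n).ncard := by
  rw [finrank_invariants_eq_add hA h2 h3, invariants_inf_ker_of_lt hA h2 h3 hn, finrank_bot,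
    add_zero]

theorem finrank_invariants_add_six (h2 : (2 : F) ≠ 0) (h3 : (3 : F) ≠ 0) (n : ℕ) :
    Module.finrank F (invariants A F (n + 6)) =
      (evenExponents (n + 6)).ncard + Module.finrank F (invariants A F n) := by
  have h_inj : Function.Injective (LinearMap.mulLeft F P) :=
    mul_right_injective₀ (sexticInvariant_ne_zero hA h3)
  rw [finrank_invariants_eq_add hA h2 h3, invariants_inf_ker_add_six hA h2 h3,
    ← (Submodule.equivMapOfInjective _ h_inj _).finrank_eq]

end Invariants

section Counting

/-- The triples `(a, b, c)` with `a + 2b + 6c = n`, the exponents of the monomials of degree `n` in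
generators of degrees `1`, `2`, `6`. -/
def weightedTriples (n : ℕ) : Set (ℕ × ℕ × ℕ) := {x | x.1 + 2 * x.2.1 + 6 * x.2.2 = n}

theorem finite_weightedTriples (n : ℕ) : (weightedTriples n).Finite := by
  refine ((Set.finite_Iic n).prod ((Set.finite_Iic n).prod (Set.finite_Iic n))).subset ?_
  rintro ⟨a, b, c⟩ (h : a + 2 * b + 6 * c = n)
  simp only [Set.mem_prod, Set.mem_Iic]
  omega

theorem ncard_evenExponents (n : ℕ) :
    (evenExponents n).ncard = (weightedTriples n ∩ {x | x.2.2 = 0}).ncard := by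
  have h_degree (d : Fin 2 →₀ ℕ) : d.degree = d 0 + d 1 := by
    rw [Finsupp.degree_eq_sum, Fin.sum_univ_two]
  refine Set.ncard_congr (fun d _ => (d 1, d 0 / 2, 0)) ?_ ?_ ?_
  · rintro d ⟨hd, m, hm⟩
    rw [h_degree] at hd
    refine ⟨?_, rfl⟩
    change d 1 + 2 * (d 0 / 2) + 6 * 0 = n
    omega
  · rintro d e ⟨-, k, hk⟩ ⟨-, l, hl⟩ hde
    simp only [Prod.mk.injEq, and_true] at hde
    ext i
    fin_cases i <;> simp only [Fin.zero_eta, Fin.mk_one] <;> omega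
  · rintro ⟨a, b, c⟩ ⟨h : a + 2 * b + 6 * c = n, rfl : c = 0⟩
    refine ⟨Finsupp.equivFunOnFinite.symm ![2 * b, a], ⟨?_, ?_⟩, ?_⟩
    · rw [h_degree]
      simp only [Finsupp.equivFunOnFinite_symm_apply_apply, Matrix.cons_val_zero,
        Matrix.cons_val_one]
      omega
    · simp
    · simp

theorem ncard_weightedTriples_eq_add (n : ℕ) :
    (weightedTriples n).ncard =
      (evenExponents n).ncard + (weightedTriples n \ {x | x.2.2 = 0}).ncard := by
  rw [ncard_evenExponents, Set.ncard_inter_add_ncard_sdiff_eq_ncard _ _ (finite_weightedTriples n)]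

theorem ncard_weightedTriples_of_lt {n : ℕ} (hn : n < 6) :
    (weightedTriples n).ncard = (evenExponents n).ncard := by
  have h_empty : weightedTriples n \ {x | x.2.2 = 0} = ∅ := by
    ext ⟨a, b, c⟩
    simp only [weightedTriples, Set.mem_sdiff, Set.mem_ofPred_eq, Set.mem_empty_iff_false,
      iff_false]
    omega
  rw [ncard_weightedTriples_eq_add, h_empty, Set.ncard_empty, add_zero]

theorem ncard_weightedTriples_add_six (n : ℕ) :
    (weightedTriples (n + 6)).ncard =
      (evenExponents (n + 6)).ncard + (weightedTriples n).ncard := by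
  have h_image : weightedTriples (n + 6) \ {x | x.2.2 = 0} =
      Prod.map id (Prod.map id Nat.succ) '' weightedTriples n := by
    ext ⟨a, b, c⟩
    simp only [weightedTriples, Set.mem_sdiff, Set.mem_image, Set.mem_ofPred_eq, Prod.exists,
      Prod.map_apply, id_eq, Prod.mk.injEq]
    constructor
    · rintro ⟨h_weight, h_pos⟩
      exact ⟨a, b, c - 1, by omega, rfl, rfl, by omega⟩
    · rintro ⟨a', b', c', h_weight, rfl, rfl, rfl⟩
      omega
  have h_inj : Function.Injective (Prod.map id (Prod.map id Nat.succ) : ℕ × ℕ × ℕ → _) :=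
    Function.injective_id.prodMap (Function.injective_id.prodMap Nat.succ_injective)
  rw [ncard_weightedTriples_eq_add, h_image, Set.ncard_image_of_injective _ h_inj]

end Counting

theorem finrank_invariants {A : Matrix (Fin 3) (Fin 3) ℤ} {F : Type*} [Field F]
    (hA : A.submatrix Fin.castSucc Fin.castSucc = CartanMatrix.G₂.transpose) (h2 : (2 : F) ≠ 0)
    (h3 : (3 : F) ≠ 0) (n : ℕ) :
    Module.finrank F (invariants A F n) = (weightedTriples n).ncard := by
  induction n using Nat.strong_induction_on with
  | _ n ih =>
    rcases lt_or_ge n 6 with hn | hn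
    · rw [finrank_invariants_of_lt hA h2 h3 hn, ncard_weightedTriples_of_lt hn]
    · obtain ⟨m, rfl⟩ := Nat.exists_eq_add_of_le' hn
      rw [finrank_invariants_add_six hA h2 h3, ncard_weightedTriples_add_six, ih m (by omega)]

end G2Invariants

theorem hilbert_series_P12_G2_general {A : Matrix (Fin 3) (Fin 3) ℤ} {F : Type*} [Field F]
    (hA : A.submatrix Fin.castSucc Fin.castSucc = CartanMatrix.G₂.transpose) (h2 : (2 : F) ≠ 0)
    (h3 : (3 : F) ≠ 0) (n : ℕ) :
    Module.finrank F
      ↥(homogeneousSubmodule (Fin 3) F n ⊓ fixedSubmodule A F 0 ⊓ fixedSubmodule A F 1) =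
      Nat.card {x : ℕ × ℕ × ℕ // x.1 + 2 * x.2.1 + 6 * x.2.2 = n} :=
  G2Invariants.finrank_invariants hA h2 h3 n

/-- For the stated Cartan matrix `A`, the homogeneous component of polynomial
degree `n` of the subalgebra of `ℚ[ω₁,ω₂,ω₃]` fixed by both `σ₁` and `σ₂` has
dimension the number of triples `(a,b,c)` of nonnegative integers with
`a + 2b + 6c = n`; i.e. its Hilbert series is `1/((1−t)(1−t²)(1−t⁶))`. -/
theorem hilbert_series_P12_G2 (n : ℕ) :
    Module.finrank ℚ
      ↥(homogeneousSubmodule (Fin 3) ℚ n ⊓ fixedSubmodule Amat ℚ 0 ⊓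
          fixedSubmodule Amat ℚ 1) =
      Nat.card {x : ℕ × ℕ × ℕ // x.1 + 2 * x.2.1 + 6 * x.2.2 = n} :=
  hilbert_series_P12_G2_general (by decide) two_ne_zero three_ne_zero n
end

section
/- Let N be a finitely generated free abelian group, M an abelian group, f : M → N a group homomorphism, and p a prime. Then the dimension over F_p of the range of the induced linear map M ⊗_ℤ F_p → N ⊗_ℤ F_p is at most the dimension over ℚ of the range of the induced linear map M ⊗_ℤ ℚ → N ⊗_ℤ ℚ. -/
/-!
A minor that is nonzero after reduction to a field was nonzero before, so rows of a matrix that are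
independent after reduction are independent over the base domain. By the equational criterion for
flatness, a linear relation in a flat module comes from a relation between the rows of a matrix of
coefficients, so the same holds for any family of vectors in a flat module. Hence the rank of
`k ⊗ f` is at most the rank of `range f`, and the latter cannot decrease under a flat base change.
-/

open TensorProduct

universe uk uS uN

section Matrix

variable {m n : Type*} [Finite n]

theorem exists_submatrix_det_ne_zero_of_linearIndependent_row {k : Type*} [Field k] [Fintype m]
    [DecidableEq m] {A : Matrix m n k} (hA : LinearIndependent k A.row) :
    ∃ c : m → n, (A.submatrix id c).det ≠ 0 := by
  have := Fintype.ofFinite n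
  obtain ⟨κ, a, ha, hspan, hind⟩ := exists_linearIndependent' k A.col
  have := Fintype.ofInjective a ha
  have hcard : Fintype.card m = Fintype.card κ := by
    rw [← hA.rank_matrix, A.rank_eq_finrank_span_cols, ← hspan, finrank_span_eq_card hind]
  let e : m ≃ κ := Fintype.equivOfCardEq hcard
  have hcol : LinearIndependent k (A.submatrix id (a ∘ e)).col := hind.comp e e.injective
  refine ⟨a ∘ e, IsUnit.ne_zero ?_⟩
  rwa [← Matrix.isUnit_iff_isUnit_det, ← Matrix.linearIndependent_cols_iff_isUnit]

theorem linearIndependent_row_of_map {R k : Type*} [CommRing R] [IsDomain R] [Field k] [Finite m]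
    (φ : R →+* k) {A : Matrix m n R} (hA : LinearIndependent k (A.map φ).row) :
    LinearIndependent R A.row := by
  classical
  have := Fintype.ofFinite m
  obtain ⟨c, hc⟩ := exists_submatrix_det_ne_zero_of_linearIndependent_row hA
  have hdet : (A.submatrix id c).det ≠ 0 := by
    intro h
    apply hc
    rw [Matrix.submatrix_map, ← RingHom.mapMatrix_apply, ← RingHom.map_det, h, map_zero]
  exact .of_comp (LinearMap.funLeft R R c) (Matrix.linearIndependent_rows_of_det_ne_zero hdet)

end Matrix

section BaseChange

variable {R M : Type*} {N : Type uN} [CommRing R] [AddCommGroup M] [AddCommGroup N]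
  [Module R M] [Module R N]

theorem linearIndependent_of_one_tmul [IsDomain R] [Module.Flat R N] {k ι : Type*} [Field k]
    [Algebra R k] {v : ι → N} (hv : LinearIndependent k fun i ↦ (1 : k) ⊗ₜ[R] v i) :
    LinearIndependent R v := by
  refine linearIndependent_iff_finset_linearIndependent.mpr fun s ↦
    Fintype.linearIndependent_iff.mpr fun g hg ↦ ?_
  obtain ⟨l, A, y, hAy, hgA⟩ := Module.Flat.isTrivialRelation_of_sum_smul_eq_zero hg
  have hvA (i : s) : Fintype.linearCombination k (fun j ↦ (1 : k) ⊗ₜ[R] y j)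
      (((Matrix.of A).map (algebraMap R k)).row i) = (1 : k) ⊗ₜ[R] v i := by
    have hi : v i = ∑ j, A i j • y j := hAy i
    simp [Fintype.linearCombination_apply, hi, tmul_sum]
  have hrow : LinearIndependent R (Matrix.of A).row := by
    refine linearIndependent_row_of_map (algebraMap R k) ?_
    refine .of_comp (Fintype.linearCombination k fun j ↦ (1 : k) ⊗ₜ[R] y j) ?_
    simpa only [Function.comp_def, hvA] using hv.comp ((↑) : s → ι) Subtype.val_injective
  refine Fintype.linearIndependent_iff.mp hrow g (funext fun j ↦ ?_)
  simpa using hgA j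

theorem rank_baseChange_submodule_le_lift_rank [IsDomain R] [Module.Flat R N] (k : Type uk)
    [Field k] [Algebra R k] (p : Submodule R N) :
    Module.rank k (p.baseChange k) ≤ Cardinal.lift.{uk} (Module.rank R p) := by
  obtain ⟨b, hb, hspan, hind⟩ := exists_linearIndependent k (p.map (mk R k N 1) : Set (k ⊗[R] N))
  choose g hgp hg using hb
  have hindN : LinearIndependent R fun x : b ↦ g x.2 :=
    linearIndependent_of_one_tmul (k := k) (by simpa only [← mk_apply, hg] using hind)
  have hindp : LinearIndependent R fun x : b ↦ (⟨g x.2, hgp x.2⟩ : p) := .of_comp p.subtype hindN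
  rw [Submodule.baseChange_eq_span, ← hspan, rank_span_set hind]
  have hle := hindp.cardinal_lift_le_rank
  rwa [Cardinal.lift_umax.{uN, uk}, Cardinal.lift_id'.{uN, uk}] at hle

theorem lift_rank_le_rank_baseChange (S : Type uS) [Ring S] [Nontrivial S] [Algebra R S]
    [Module.Flat R S] : Cardinal.lift.{uS} (Module.rank R N) ≤ Module.rank S (S ⊗[R] N) := by
  rw [Module.rank_def R, Cardinal.lift_iSup Cardinal.bddAbove_of_small]
  refine ciSup_le' fun ⟨s, hs⟩ ↦ ?_
  have hle := (Module.Flat.linearIndependent_one_tmul (S := S) hs).cardinal_lift_le_rank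
  rwa [Cardinal.lift_umax.{uN, uS}, Cardinal.lift_id'.{uN, uS}] at hle

theorem range_baseChange (A : Type*) [Ring A] [Algebra R A] (f : M →ₗ[R] N) :
    (f.baseChange A).range = f.range.baseChange A := by
  have hf : f.baseChange A = f.range.subtype.baseChange A ∘ₗ f.rangeRestrict.baseChange A := by
    rw [← LinearMap.baseChange_comp, LinearMap.subtype_comp_codRestrict]
  rw [hf, LinearMap.range_comp_of_range_eq_top, Submodule.baseChange]
  exact LinearMap.range_eq_top.mpr (LinearMap.lTensor_surjective A f.surjective_rangeRestrict)

theorem modp_rank_le_rational_rank_general [IsDomain R] [Module.Flat R N] (k : Type uk) [Field k]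
    [Algebra R k] (S : Type uS) [Ring S] [Nontrivial S] [Algebra R S] [Module.Flat R S]
    (f : M →ₗ[R] N) :
    Cardinal.lift.{uS} (f.baseChange k).rank ≤ Cardinal.lift.{uk} (f.baseChange S).rank := by
  rw [LinearMap.rank, LinearMap.rank, range_baseChange, range_baseChange]
  calc
    Cardinal.lift.{uS} (Module.rank k (f.range.baseChange k))
        ≤ Cardinal.lift.{uS} (Cardinal.lift.{uk} f.rank) :=
      Cardinal.lift_le.mpr (rank_baseChange_submodule_le_lift_rank k f.range)
    _ = Cardinal.lift.{uk} (Cardinal.lift.{uS} f.rank) := by simp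
    _ ≤ Cardinal.lift.{uk} (Module.rank S (S ⊗[R] f.range)) :=
      Cardinal.lift_le.mpr (lift_rank_le_rank_baseChange S)
    _ = Cardinal.lift.{uk} (Module.rank S (f.range.baseChange S)) := by
      rw [(Submodule.toBaseChange.toLinearEquiv S f.range).rank_eq]

end BaseChange

/-- Let `N` be a finitely generated free abelian group, `f : M → N` a homomorphism
of abelian groups and `p` a prime.  Then the `𝔽_p`-dimension of the range of the
induced map `M ⊗ 𝔽_p → N ⊗ 𝔽_p` is at most the `ℚ`-dimension of the range of the
induced map `M ⊗ ℚ → N ⊗ ℚ`. -/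
theorem modp_rank_le_rational_rank (M N : Type*)
    [AddCommGroup M] [AddCommGroup N] [Module.Free ℤ N] [Module.Finite ℤ N]
    (f : M →+ N) (p : ℕ) [Fact p.Prime] :
    Module.finrank (ZMod p)
        ↥(LinearMap.range (LinearMap.baseChange (ZMod p) f.toIntLinearMap)) ≤
      Module.finrank ℚ
        ↥(LinearMap.range (LinearMap.baseChange ℚ f.toIntLinearMap)) :=
  Cardinal.toNat_le_toNat
    (by simpa using modp_rank_le_rational_rank_general (ZMod p) ℚ f.toIntLinearMap)
    (Module.rank_lt_aleph0 ℚ _)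
end
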